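/- Let d ≥ 2, let F ⊂ ℕ be a finite set, and for each n ∈ F let u_n⁺ and u_n⁻ be spherical harmonics of degree n on S^d. Define u(t,x) = ∑_{n∈F} ( e^{it(n+(d-1)/2)} u_n⁺(x) + e^{-it(n+(d-1)/2)} u_n⁻(x) ). Then ∫_0^{2π} ∫_{S^d ∩ {x_{d+1}>0}} |∂_t u(t,x)|² dσ(x) dt = π ∑_{n∈F} (n+(d-1)/2)² ( ‖u_n⁺‖²_{L²(S^d,σ)} + ‖u_n⁻‖²_{L²(S^d,σ)} ). -/

import Mathlib

open MeasureTheory Complex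

lemma obs_exp_integral (w : ℝ) (hw : ∃ m : ℤ, m ≠ 0 ∧ w = m) :
    ∫ t in (0 : ℝ)..(2 * Real.pi), Complex.exp ((I * w) * t) = 0 := by
  obtain ⟨m, hm, rfl⟩ := hw
  have hc : (I * ((m : ℝ) : ℂ)) ≠ 0 := by
    simp [I_ne_zero, hm]
  rw [integral_exp_mul_complex hc]
  have : Complex.exp (I * ((m : ℝ) : ℂ) * ((2 * Real.pi : ℝ) : ℂ)) = 1 := by
    rw [Complex.exp_eq_one_iff]
    exact ⟨m, by push_cast; ring⟩
  rw [this]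
  simp

lemma obs_parseval {ι : Type*} [DecidableEq ι] (s : Finset ι) (w : ι → ℝ) (a : ι → ℂ)
    (hw : ∀ j ∈ s, ∀ k ∈ s, j ≠ k → ∃ m : ℤ, m ≠ 0 ∧ w j - w k = m) :
    ∫ t in (0 : ℝ)..(2 * Real.pi), ‖∑ j ∈ s, a j * Complex.exp ((I * w j) * t)‖ ^ 2
      = 2 * Real.pi * ∑ j ∈ s, ‖a j‖ ^ 2 := by
  have key : ∀ t : ℝ, ((‖∑ j ∈ s, a j * Complex.exp ((I * w j) * t)‖ ^ 2 : ℝ) : ℂ)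
      = ∑ j ∈ s, ∑ k ∈ s, (a j * (starRingEnd ℂ) (a k)) *
          Complex.exp ((I * (w j - w k : ℝ)) * t) := by
    intro t
    rw [← Complex.normSq_eq_norm_sq, ← Complex.mul_conj, map_sum, Finset.sum_mul_sum]
    refine Finset.sum_congr rfl fun j _ => Finset.sum_congr rfl fun k _ => ?_
    rw [map_mul, ← Complex.exp_conj]
    simp only [map_mul, conj_I, conj_ofReal]
    rw [mul_mul_mul_comm, ← Complex.exp_add]
    congr 2
    push_cast
    ring
  apply Complex.ofReal_injective
  rw [← intervalIntegral.integral_ofReal]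
  simp_rw [key]
  have hint : ∀ j k, IntervalIntegrable (fun t : ℝ => (a j * (starRingEnd ℂ) (a k)) *
          Complex.exp ((I * (w j - w k : ℝ)) * t)) volume 0 (2 * Real.pi) := by
    intro j k
    apply Continuous.intervalIntegrable
    fun_prop
  rw [intervalIntegral.integral_finsetSum
    (fun j _ => by
      apply Continuous.intervalIntegrable
      fun_prop)]
  push_cast
  rw [Finset.mul_sum]
  refine Finset.sum_congr rfl fun j hj => ?_
  rw [intervalIntegral.integral_finsetSum (fun k _ => by
      apply Continuous.intervalIntegrable
      fun_prop)]
  rw [Finset.sum_eq_single j]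
  · rw [intervalIntegral.integral_const_mul]
    simp [Complex.mul_conj, Complex.normSq_eq_norm_sq]
    ring
  · intro k hk hkj
    have := obs_exp_integral (w j - w k) (hw j hj k hk hkj.symm)
    rw [intervalIntegral.integral_const_mul]
    push_cast at this ⊢
    rw [this, mul_zero]
  · exact fun h => absurd hj h

lemma obs_eval_neg {m : ℕ} (x : Fin m → ℂ) (f : MvPolynomial (Fin m) ℂ) (n : ℕ)
    (hf : f.IsHomogeneous n) :
    MvPolynomial.eval (fun i => - x i) f = (-1) ^ n * MvPolynomial.eval x f := by
  rw [MvPolynomial.eval_eq', MvPolynomial.eval_eq', Finset.mul_sum]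
  refine Finset.sum_congr rfl fun k hk => ?_
  have h1 := hf (MvPolynomial.mem_support_iff.1 hk)
  have h2 : ∑ i, k i = n := by
    rw [← h1, Finsupp.weight_apply, Finsupp.sum_fintype]
    · simp
    · simp
  have h3 : ∏ i, (- x i) ^ k i = (-1) ^ n * ∏ i, x i ^ k i := by
    rw [← h2, ← Finset.prod_pow_eq_pow_sum, ← Finset.prod_mul_distrib]
    refine Finset.prod_congr rfl fun i _ => ?_
    rw [← mul_pow, neg_one_mul]
  rw [h3]
  ring

open scoped Pointwise in
lemma obs_sphere_neg {d : ℕ} :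
    MeasurePreserving (fun x : Metric.sphere (0 : EuclideanSpace ℝ (Fin (d + 1))) 1 => -x)
      (volume : Measure (EuclideanSpace ℝ (Fin (d + 1)))).toSphere
      (volume : Measure (EuclideanSpace ℝ (Fin (d + 1)))).toSphere := by
  have hm : Measurable (fun x : Metric.sphere (0 : EuclideanSpace ℝ (Fin (d + 1))) 1 => -x) :=
    continuous_neg.measurable
  refine ⟨hm, ?_⟩
  ext s hs
  rw [Measure.map_apply hm hs, Measure.toSphere_apply' _ hs, Measure.toSphere_apply' _ (hm hs)]
  congr 1
  rw [← Measure.measure_neg]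
  congr 1
  ext y
  simp only [Set.mem_neg, Set.mem_smul, Set.mem_image, Set.mem_preimage]
  constructor
  · rintro ⟨r, hr, _, ⟨z, hz, rfl⟩, h⟩
    refine ⟨r, hr, _, ⟨-z, hz, rfl⟩, ?_⟩
    rw [← neg_neg y, ← h]
    simp
  · rintro ⟨r, hr, _, ⟨z, hz, rfl⟩, h⟩
    refine ⟨r, hr, _, ⟨-z, by simpa using hz, rfl⟩, ?_⟩
    rw [← h]
    simp

open scoped Pointwise in
lemma obs_equator {d : ℕ} :
    (volume : Measure (EuclideanSpace ℝ (Fin (d + 1)))).toSphere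
      {x | (x : EuclideanSpace ℝ (Fin (d + 1))) (Fin.last d) = 0} = 0 := by
  have hs : MeasurableSet {x : Metric.sphere (0 : EuclideanSpace ℝ (Fin (d + 1))) 1 |
      (x : EuclideanSpace ℝ (Fin (d + 1))) (Fin.last d) = 0} := by
    apply IsClosed.measurableSet
    apply isClosed_eq <;> fun_prop
  rw [Measure.toSphere_apply' _ hs]
  let L : Submodule ℝ (EuclideanSpace ℝ (Fin (d + 1))) :=
    LinearMap.ker (EuclideanSpace.proj (𝕜 := ℝ) (Fin.last d)).toLinearMap
  have hL : L ≠ ⊤ := by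
    intro h
    have : EuclideanSpace.single (Fin.last d) (1 : ℝ) ∈ L := by rw [h]; trivial
    simp [L] at this
  have h0 := Measure.addHaar_submodule volume L hL
  rw [measure_mono_null _ h0, mul_zero]
  intro y
  simp only [Set.mem_smul, Set.mem_image]
  rintro ⟨r, hr, _, ⟨z, hz, rfl⟩, rfl⟩
  have hz' : (z : EuclideanSpace ℝ (Fin (d + 1))) (Fin.last d) = 0 := hz
  simp [L, hz']

lemma obs_half {d : ℕ} (g : Metric.sphere (0 : EuclideanSpace ℝ (Fin (d + 1))) 1 → ℝ)
    (hg : Continuous g) (heven : ∀ x, g (-x) = g x) :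
    2 * ∫ x in {x : Metric.sphere (0 : EuclideanSpace ℝ (Fin (d + 1))) 1 |
          0 < (x : EuclideanSpace ℝ (Fin (d + 1))) (Fin.last d)}, g x
        ∂(volume : Measure (EuclideanSpace ℝ (Fin (d + 1)))).toSphere
      = ∫ x, g x ∂(volume : Measure (EuclideanSpace ℝ (Fin (d + 1)))).toSphere := by
  set μ := (volume : Measure (EuclideanSpace ℝ (Fin (d + 1)))).toSphere with hμ
  set S : Set (Metric.sphere (0 : EuclideanSpace ℝ (Fin (d + 1))) 1) :=
    {x | 0 < (x : EuclideanSpace ℝ (Fin (d + 1))) (Fin.last d)} with hS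
  have hmS : MeasurableSet S := by
    apply IsOpen.measurableSet
    apply isOpen_lt <;> fun_prop
  have hint : Integrable g μ := by
    have := hg.continuousOn.integrableOn_compact (μ := μ) isCompact_univ
    simpa using this
  rw [← integral_add_compl hmS hint, two_mul]
  congr 1
  have h1 : ∫ x in (fun x => -x) ⁻¹' S, g (-x) ∂μ = ∫ x in S, g x ∂μ :=
    obs_sphere_neg.setIntegral_preimage_emb
      (Homeomorph.neg _).measurableEmbedding g S
  rw [← h1]
  simp_rw [heven]
  apply setIntegral_congr_set
  have hne : ∀ᵐ x : Metric.sphere (0 : EuclideanSpace ℝ (Fin (d + 1))) 1 ∂μ,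
      ¬ (x : EuclideanSpace ℝ (Fin (d + 1))) (Fin.last d) = 0 := by
    rw [ae_iff]
    simp only [not_not]
    exact obs_equator
  filter_upwards [hne] with x hx
  apply propext
  change 0 < (-(x : EuclideanSpace ℝ (Fin (d + 1)))) (Fin.last d) ↔
    ¬ (0 < (x : EuclideanSpace ℝ (Fin (d + 1))) (Fin.last d))
  simp only [PiLp.neg_apply, Left.neg_pos_iff, not_lt]
  exact ⟨le_of_lt, fun h => lt_of_le_of_ne h hx⟩

open MeasureTheory Complex

/-- Observability identity on `S^d` (`d ≥ 2`): for a finite superposition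
`u(t,x) = ∑_{n ∈ F} (e^{it(n+(d-1)/2)} uₙ⁺(x) + e^{-it(n+(d-1)/2)} uₙ⁻(x))`
of spherical harmonics, the time–space integral of `|∂ₜu|²` over
`[0,2π] × (upper hemisphere)` equals
`π ∑_{n ∈ F} (n+(d-1)/2)² (‖uₙ⁺‖² + ‖uₙ⁻‖²)`. -/
theorem observability_perturbed_wave_sphere
    (d : ℕ) (hd : 2 ≤ d) (F : Finset ℕ)
    (p q : ℕ → MvPolynomial (Fin (d + 1)) ℂ)
    (hphom : ∀ n ∈ F, (p n).IsHomogeneous n)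
    (hqhom : ∀ n ∈ F, (q n).IsHomogeneous n)
    (hpharm : ∀ n ∈ F, (∑ i : Fin (d + 1),
      MvPolynomial.pderiv i (MvPolynomial.pderiv i (p n))) = 0)
    (hqharm : ∀ n ∈ F, (∑ i : Fin (d + 1),
      MvPolynomial.pderiv i (MvPolynomial.pderiv i (q n))) = 0)
    (u : ℝ → Metric.sphere (0 : EuclideanSpace ℝ (Fin (d + 1))) 1 → ℂ)
    (hu : ∀ t x, u t x = ∑ n ∈ F,
      (Complex.exp (I * t * ((n : ℂ) + ((d : ℂ) - 1) / 2)) *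
          MvPolynomial.eval
            (fun i => ((x : EuclideanSpace ℝ (Fin (d + 1))) i : ℂ)) (p n)
        + Complex.exp (-(I * t * ((n : ℂ) + ((d : ℂ) - 1) / 2))) *
          MvPolynomial.eval
            (fun i => ((x : EuclideanSpace ℝ (Fin (d + 1))) i : ℂ)) (q n))) :
    (∫ t in (0 : ℝ)..(2 * Real.pi),
      ∫ x in {x : Metric.sphere (0 : EuclideanSpace ℝ (Fin (d + 1))) 1 |
          0 < (x : EuclideanSpace ℝ (Fin (d + 1))) (Fin.last d)},
        ‖deriv (fun s => u s x) t‖ ^ 2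
        ∂(volume : Measure (EuclideanSpace ℝ (Fin (d + 1)))).toSphere)
    = Real.pi * ∑ n ∈ F, ((n : ℝ) + ((d : ℝ) - 1) / 2) ^ 2 *
        ((∫ x : Metric.sphere (0 : EuclideanSpace ℝ (Fin (d + 1))) 1,
            ‖MvPolynomial.eval
              (fun i => ((x : EuclideanSpace ℝ (Fin (d + 1))) i : ℂ)) (p n)‖ ^ 2
            ∂(volume : Measure (EuclideanSpace ℝ (Fin (d + 1)))).toSphere)
          + (∫ x : Metric.sphere (0 : EuclideanSpace ℝ (Fin (d + 1))) 1,
            ‖MvPolynomial.eval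
              (fun i => ((x : EuclideanSpace ℝ (Fin (d + 1))) i : ℂ)) (q n)‖ ^ 2
            ∂(volume : Measure (EuclideanSpace ℝ (Fin (d + 1)))).toSphere)) := by
  have hcont : ∀ f : MvPolynomial (Fin (d + 1)) ℂ, Continuous
      (fun x : Metric.sphere (0 : EuclideanSpace ℝ (Fin (d + 1))) 1 => MvPolynomial.eval
        (fun i => ((x : EuclideanSpace ℝ (Fin (d + 1))) i : ℂ)) f) := by
    intro f
    have h1 := MvPolynomial.continuous_eval f
    exact h1.comp (by fun_prop)
  have hneg : ∀ n (f : MvPolynomial (Fin (d + 1)) ℂ), f.IsHomogeneous n →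
      ∀ x : Metric.sphere (0 : EuclideanSpace ℝ (Fin (d + 1))) 1,
      ‖MvPolynomial.eval
        (fun i => (((-x : Metric.sphere (0 : EuclideanSpace ℝ (Fin (d + 1))) 1) :
          EuclideanSpace ℝ (Fin (d + 1))) i : ℂ)) f‖ ^ 2 =
      ‖MvPolynomial.eval
        (fun i => ((x : EuclideanSpace ℝ (Fin (d + 1))) i : ℂ)) f‖ ^ 2 := by
    intro n f hf x
    have := obs_eval_neg (fun i => ((x : EuclideanSpace ℝ (Fin (d + 1))) i : ℂ)) f n hf
    have h2 : (fun i => (((-x : Metric.sphere (0 : EuclideanSpace ℝ (Fin (d + 1))) 1) :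
          EuclideanSpace ℝ (Fin (d + 1))) i : ℂ)) =
          fun i => -((x : EuclideanSpace ℝ (Fin (d + 1))) i : ℂ) := by
      ext i
      simp
    rw [h2, this]
    simp
  set μ := (volume : Measure (EuclideanSpace ℝ (Fin (d + 1)))).toSphere with hμ
  set S : Set (Metric.sphere (0 : EuclideanSpace ℝ (Fin (d + 1))) 1) :=
    {x | 0 < (x : EuclideanSpace ℝ (Fin (d + 1))) (Fin.last d)} with hS
  let lam : ℕ → ℝ := fun n => (n : ℝ) + ((d : ℝ) - 1) / 2
  let w : ℕ ⊕ ℕ → ℝ := Sum.elim lam (fun n => - lam n)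
  let P : ℕ ⊕ ℕ → MvPolynomial (Fin (d + 1)) ℂ := Sum.elim p q
  let a : ℕ ⊕ ℕ → Metric.sphere (0 : EuclideanSpace ℝ (Fin (d + 1))) 1 → ℂ := fun j x =>
    MvPolynomial.eval (fun i => ((x : EuclideanSpace ℝ (Fin (d + 1))) i : ℂ)) (P j)
  have hu' : ∀ t x, u t x = ∑ j ∈ F.disjSum F, a j x * Complex.exp ((I * w j) * t) := by
    intro t x
    rw [hu, Finset.sum_disjSum, ← Finset.sum_add_distrib]
    refine Finset.sum_congr rfl fun n _ => ?_
    simp only [a, P, w, lam, Sum.elim_inl, Sum.elim_inr]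
    push_cast
    rw [mul_comm (Complex.exp (I * _ * _)), mul_comm (Complex.exp (-_))]
    congr 3
    · ring
    · ring
  have hderiv : ∀ t x, deriv (fun s => u s x) t =
      ∑ j ∈ F.disjSum F, ((I * w j) * a j x) * Complex.exp ((I * w j) * t) := by
    intro t x
    simp_rw [hu']
    apply HasDerivAt.deriv
    apply HasDerivAt.fun_sum
    intro j _
    have h1 : HasDerivAt (fun s : ℝ => (I * w j) * (s : ℂ)) (I * w j) t := by
      simpa using (Complex.ofRealCLM.hasDerivAt (x := t)).const_mul (I * (w j : ℂ))
    have h2 := h1.cexp.const_mul (a j x)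
    exact h2.congr_deriv (by ring)
  simp_rw [hderiv]
  have ha : ∀ j, Continuous (a j) := fun j => hcont (P j)
  rw [intervalIntegral_integral_swap]
  swap
  · rw [Measure.prod_restrict]
    refine IntegrableOn.mono_set (t := Set.uIcc 0 (2 * Real.pi) ×ˢ Set.univ) ?_
      (Set.prod_mono Set.uIoc_subset_uIcc (Set.subset_univ _))
    apply ContinuousOn.integrableOn_compact (isCompact_uIcc.prod isCompact_univ)
    apply Continuous.continuousOn
    fun_prop
  have hw : ∀ j ∈ F.disjSum F, ∀ k ∈ F.disjSum F, j ≠ k →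
      ∃ m : ℤ, m ≠ 0 ∧ w j - w k = m := by
    rintro (n | n) - (m | m) - hne
    · refine ⟨(n : ℤ) - m, fun h => hne ?_, by simp [w, lam]⟩
      congr 1
      omega
    · refine ⟨(n : ℤ) + m + d - 1, by omega, ?_⟩
      simp only [w, lam, Sum.elim_inl, Sum.elim_inr]
      push_cast
      ring
    · refine ⟨-((n : ℤ) + m + d - 1), by omega, ?_⟩
      simp only [w, lam, Sum.elim_inl, Sum.elim_inr]
      push_cast
      ring
    · refine ⟨(m : ℤ) - n, fun h => hne ?_, ?_⟩
      · congr 1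
        omega
      · simp only [w, lam, Sum.elim_inr]
        push_cast
        ring
  simp_rw [obs_parseval (F.disjSum F) w _ hw]
  rw [integral_const_mul, mul_assoc, mul_left_comm]
  congr 1
  rw [obs_half]
  rotate_left
  · fun_prop
  · intro x
    refine Finset.sum_congr rfl fun j hj => ?_
    simp only [norm_mul, mul_pow]
    congr 1
    rcases j with n | n
    · exact hneg n (p n) (hphom n (by simpa using hj)) x
    · exact hneg n (q n) (hqhom n (by simpa using hj)) x
  have hint : ∀ g : Metric.sphere (0 : EuclideanSpace ℝ (Fin (d + 1))) 1 → ℝ, Continuous g →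
      Integrable g μ := by
    intro g hg
    have := hg.continuousOn.integrableOn_compact (μ := μ) isCompact_univ
    simpa using this
  rw [integral_finsetSum _ (fun j _ => hint _ (by fun_prop)), Finset.sum_disjSum,
    ← Finset.sum_add_distrib]
  refine Finset.sum_congr rfl fun n _ => ?_
  simp only [norm_mul, mul_pow, integral_const_mul]
  simp only [a, P, w, lam, Sum.elim_inl, Sum.elim_inr, norm_I, one_pow, one_mul,
    Complex.norm_real, Real.norm_eq_abs, sq_abs, neg_sq]
  ring
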